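/- Let B be an additive category and K(B) its homotopy category of (cohomological) complexes. Let K(B)^{≥0} (respectively K(B)^{≤0}) denote the class of complexes homotopy equivalent to complexes concentrated in degrees ≥ 0 (respectively ≤ 0). Then the pair (K(B)_{w≤0}, K(B)_{w≥0}) := (K(B)^{≥0}, K(B)^{≤0}) is a weight structure on K(B) (the 'stupid' weight structure). -/

import Mathlib

open CategoryTheory CategoryTheory.Limits CategoryTheory.Pretriangulated

universe v u v₂ u₂

/-- `X` is a retract of `Y`: the identity of `X` factors through `Y`. -/
def IsRetract {C : Type u} [Category.{v} C] (X Y : C) : Prop :=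
  ∃ (i : X ⟶ Y) (r : Y ⟶ X), i ≫ r = 𝟙 X

variable (C : Type u) [Category.{v} C] [HasZeroObject C] [Preadditive C] [HasShift C ℤ]
  [∀ n : ℤ, (shiftFunctor C n).Additive] [Pretriangulated C]

/-- A weight structure on a triangulated category `C`, given by the classes
`LE = C_{w≤0}` and `GE = C_{w≥0}`. -/
structure WeightStructure where
  LE : Set C
  GE : Set C
  retract_mem_LE : ∀ ⦃X Y : C⦄, IsRetract X Y → Y ∈ LE → X ∈ LE
  retract_mem_GE : ∀ ⦃X Y : C⦄, IsRetract X Y → Y ∈ GE → X ∈ GE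
  shift_LE : ∀ X ∈ LE, X⟦(-1 : ℤ)⟧ ∈ LE
  shift_GE : ∀ X ∈ GE, X⟦(1 : ℤ)⟧ ∈ GE
  orthogonal : ∀ ⦃X Y : C⦄, X ∈ LE → Y ∈ GE → ∀ f : X ⟶ Y⟦(1 : ℤ)⟧, f = 0
  exists_decomp : ∀ M : C, ∃ (B A : C) (f : B ⟶ M) (g : M ⟶ A) (h : A ⟶ B⟦(1 : ℤ)⟧),
    (Triangle.mk f g h ∈ distTriang C) ∧ B ∈ LE ∧ A⟦(-1 : ℤ)⟧ ∈ GE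

namespace WeightStructure

variable {C}

/-- `C_{w≤n} = C_{w≤0}[n]`. -/
def le (w : WeightStructure C) (n : ℤ) : Set C := {X : C | X⟦(-n)⟧ ∈ w.LE}

/-- `C_{w≥n} = C_{w≥0}[n]`. -/
def ge (w : WeightStructure C) (n : ℤ) : Set C := {X : C | X⟦(-n)⟧ ∈ w.GE}

/-- `C_{w=n} = C_{w≤n} ∩ C_{w≥n}`. -/
def heart (w : WeightStructure C) (n : ℤ) : Set C := w.le n ∩ w.ge n

end WeightStructure

variable {C}

/-- The envelope of a class `D`: the smallest class containing `D` and all zero objects that is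
closed under extensions and retracts. -/
inductive Envelope (D : Set C) : C → Prop
  | of (X : C) (hX : X ∈ D) : Envelope D X
  | zero (Z : C) (hZ : IsZero Z) : Envelope D Z
  | ext (T : Triangle C) (hT : T ∈ distTriang C)
      (h₁ : Envelope D T.obj₁) (h₃ : Envelope D T.obj₃) : Envelope D T.obj₂
  | retract (X Y : C) (h : IsRetract X Y) (hY : Envelope D Y) : Envelope D X

/-!
Orthogonality holds degreewise and the weight decompositions are the triangles
`σ_{≥ a + 1} K ⟶ K ⟶ σ_{≤ a} K` of stupid truncations, so the point is the closure under retracts.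
Let `X` be a retract of a complex in degrees `≥ 0`. The map `X ⟶ σ_{≤ -1} X` is zero, so
`σ_{≥ 0} X` is the direct sum of `X` and `R := (σ_{≤ -1} X)⟦-1⟧`. The projection `σ_{≥ 0} X ⟶ R`
goes from degrees `≥ 0` to degrees `≤ 0`, hence factors through an object `A` of `B` in degree `0`,
of which `R` is therefore a retract. Although the corresponding idempotent `f` of `A` need not split
in `B`, it splits in `K(B)`: its image is `σ_{≥ 0}` of the periodic complex with differentials `f`
and `𝟙 A - f` alternating. This complex is contractible, so `R` can be represented both in
degrees `≥ 0` and in degrees `≤ 0`. Now `X` is, up to a shift, the cone of `σ_{≥ 0} X ⟶ R` and thus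
lives in degrees `≥ 0`. The argument for degrees `≤ 0` is dual.
-/

namespace StupidWeightStructure

open ComplexShape HomologicalComplex

section Retract

variable {D : Type*} [Category* D]

/-- Two retracts of `A` that cut out the same idempotent of `A` are isomorphic. -/
def isoOfRetract {X Y A : D} (h : Retract X A) (h' : Retract Y A)
    (w : h.r ≫ h.i = h'.r ≫ h'.i) : X ≅ Y where
  hom := h.i ≫ h'.r
  inv := h'.i ≫ h.r
  hom_inv_id := by simp [← reassoc_of% w]
  inv_hom_id := by simp [reassoc_of% w]

end Retract

section SplitTriangle

lemma exists_complementary_distTriang {T : Triangle C} (hT : T ∈ distTriang C)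
    (h₀ : T.mor₃ = 0) :
    ∃ (s : T.obj₃ ⟶ T.obj₂) (r : T.obj₂ ⟶ T.obj₁),
      Triangle.mk s r 0 ∈ distTriang C ∧ s ≫ T.mor₂ = 𝟙 _ ∧ T.mor₁ ≫ r = 𝟙 _ := by
  obtain ⟨e, h₁, h₂⟩ := exists_iso_binaryBiproduct_of_distTriang T hT h₀
  refine ⟨biprod.inr ≫ e.inv, e.hom ≫ biprod.fst, ?_, by simp [h₂], by simp [reassoc_of% h₁]⟩
  refine isomorphic_distinguished _ (binaryBiproductTriangle_distinguished T.obj₃ T.obj₁) _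
    (Triangle.isoMk _ _ (Iso.refl T.obj₃) (e ≪≫ biprod.braiding T.obj₁ T.obj₃) (Iso.refl T.obj₁)
      ?_ ?_ ?_)
  · change (biprod.inr ≫ e.inv) ≫ (e ≪≫ biprod.braiding T.obj₁ T.obj₃).hom = 𝟙 _ ≫ biprod.inl
    apply biprod.hom_ext <;> simp
  · change (e.hom ≫ biprod.fst) ≫ 𝟙 _ = (e ≪≫ biprod.braiding T.obj₁ T.obj₃).hom ≫ biprod.snd
    simp
  · exact zero_comp.trans comp_zero.symm

end SplitTriangle

section StupidTrunc

variable {ι ι' : Type*} {c : ComplexShape ι} {c' : ComplexShape ι'} {D : Type*} [Category* D]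
  [HasZeroMorphisms D] [HasZeroObject D] (K : HomologicalComplex D c') (e : c.Embedding c')

section Degreewise

variable [e.IsRelIff]

open Classical in
/-- The degree `n` part of the inclusion of a stupid truncation of `K`: an isomorphism in the
degrees kept by `e`, zero in the others. It need not commute with the differentials. -/
noncomputable def stupidTruncInclX (n : ι') : (K.stupidTrunc e).X n ⟶ K.X n :=
  if h : ∃ i, e.f i = n then (K.stupidTruncXIso e h.choose_spec).hom else 0

open Classical in
/-- The degree `n` part of the projection onto a stupid truncation of `K`, inverse to
`stupidTruncInclX` in the degrees kept by `e`. -/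
noncomputable def stupidTruncProjX (n : ι') : K.X n ⟶ (K.stupidTrunc e).X n :=
  if h : ∃ i, e.f i = n then (K.stupidTruncXIso e h.choose_spec).inv else 0

lemma stupidTruncInclX_comp_projX (n : ι') :
    stupidTruncInclX K e n ≫ stupidTruncProjX K e n = 𝟙 _ := by
  by_cases h : ∃ i, e.f i = n
  · simp [stupidTruncInclX, stupidTruncProjX, h]
  · exact (K.isZero_stupidTrunc_X e n (by simpa using h)).eq_of_src _ _

lemma stupidTruncProjX_comp_inclX {n : ι'} (h : ∃ i, e.f i = n) :
    stupidTruncProjX K e n ≫ stupidTruncInclX K e n = 𝟙 _ := by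
  simp [stupidTruncInclX, stupidTruncProjX, h]

lemma stupidTruncProjX_eq_zero {n : ι'} (h : ∀ i, e.f i ≠ n) : stupidTruncProjX K e n = 0 :=
  (K.isZero_stupidTrunc_X e n h).eq_of_tgt _ _

lemma stupidTrunc_d (m n : ι') :
    (K.stupidTrunc e).d m n = stupidTruncInclX K e m ≫ K.d m n ≫ stupidTruncProjX K e n := by
  by_cases hm : ∃ i, e.f i = m
  · by_cases hn : ∃ j, e.f j = n
    · simp only [stupidTruncInclX, stupidTruncProjX, hm, hn, dite_true]
      refine ((K.restriction e).extend_d_eq e hm.choose_spec hn.choose_spec).trans ?_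
      rw [K.restriction_d_eq e hm.choose_spec hn.choose_spec, Category.assoc, Category.assoc]
      exact (Category.assoc _ _ _).symm
    · exact (K.isZero_stupidTrunc_X e n (by simpa using hn)).eq_of_tgt _ _
  · exact (K.isZero_stupidTrunc_X e m (by simpa using hm)).eq_of_src _ _

end Degreewise

/-- The inclusion of a stupid truncation `K.stupidTrunc e` as a subcomplex of `K`, for an
embedding `e` whose image is stable under successors. -/
noncomputable def stupidTruncι [e.IsTruncGE] : K.stupidTrunc e ⟶ K where
  f := stupidTruncInclX K e
  comm' m n hmn := by
    by_cases hm : ∃ i, e.f i = m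
    · obtain ⟨i, rfl⟩ := hm
      simp [stupidTrunc_d, stupidTruncProjX_comp_inclX K e (e.mem_next hmn)]
    · exact (K.isZero_stupidTrunc_X e m (by simpa using hm)).eq_of_src _ _

/-- The projection of `K` onto a stupid truncation `K.stupidTrunc e`, for an embedding `e` whose
image is stable under predecessors. -/
noncomputable def stupidTruncπ [e.IsTruncLE] : K ⟶ K.stupidTrunc e where
  f := stupidTruncProjX K e
  comm' m n hmn := by
    by_cases hn : ∃ j, e.f j = n
    · obtain ⟨j, rfl⟩ := hn
      simp [stupidTrunc_d, reassoc_of% (stupidTruncProjX_comp_inclX K e (e.mem_prev hmn))]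
    · exact (K.isZero_stupidTrunc_X e n (by simpa using hn)).eq_of_tgt _ _

end StupidTrunc

section StupidTruncShortComplex

variable {ι ι₁ ι₂ : Type*} {c : ComplexShape ι} {c₁ : ComplexShape ι₁} {c₂ : ComplexShape ι₂}
  {B : Type*} [Category* B] [Preadditive B] [HasZeroObject B] (K : HomologicalComplex B c)
  {e₁ : c₁.Embedding c} {e₂ : c₂.Embedding c} [e₁.IsTruncGE] [e₂.IsTruncLE]
  (ac : e₁.AreComplementary e₂)

/-- The sequence `K.stupidTrunc e₁ ⟶ K ⟶ K.stupidTrunc e₂` of stupid truncations at complementary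
embeddings. -/
noncomputable def stupidTruncShortComplex : ShortComplex (HomologicalComplex B c) where
  f := stupidTruncι K e₁
  g := stupidTruncπ K e₂
  zero := by
    ext n
    obtain ⟨i, rfl⟩ | ⟨i, rfl⟩ := ac.union n
    · exact (K.isZero_stupidTrunc_X e₂ _ fun j h ↦ ac.disjoint i j h.symm).eq_of_tgt _ _
    · exact (K.isZero_stupidTrunc_X e₁ _ fun j h ↦ ac.disjoint j i h).eq_of_src _ _

/-- The degreewise splitting of `stupidTruncShortComplex`, which exhibits it as a semi-split short
exact sequence of complexes. -/
noncomputable def stupidTruncSplitting (n : ι) :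
    ((stupidTruncShortComplex K ac).map (eval B c n)).Splitting where
  r := stupidTruncProjX K e₁ n
  s := stupidTruncInclX K e₂ n
  f_r := stupidTruncInclX_comp_projX K e₁ n
  s_g := stupidTruncInclX_comp_projX K e₂ n
  id := by
    change stupidTruncProjX K e₁ n ≫ stupidTruncInclX K e₁ n +
      stupidTruncProjX K e₂ n ≫ stupidTruncInclX K e₂ n = 𝟙 _
    obtain ⟨i, rfl⟩ | ⟨i, rfl⟩ := ac.union n
    · rw [stupidTruncProjX_comp_inclX K e₁ ⟨i, rfl⟩, stupidTruncProjX_eq_zero K e₂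
        fun j h ↦ ac.disjoint i j h.symm, zero_comp, add_zero]
    · rw [stupidTruncProjX_comp_inclX K e₂ ⟨i, rfl⟩, stupidTruncProjX_eq_zero K e₁
        fun j h ↦ ac.disjoint j i h, zero_comp, zero_add]

end StupidTruncShortComplex

section Single

variable {ι : Type*} [DecidableEq ι] (c : ComplexShape ι) (B : Type*) [Category* B] [Preadditive B]
  [HasZeroObject B]

instance faithful_single_comp_quotient (j : ι) :
    (single B c j ⋙ HomotopyCategory.quotient B c).Faithful where
  map_injective {A A'} f g hfg := by
    have hcomm := (HomotopyCategory.homotopyOfEq _ _ hfg).comm j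
    simpa [dNext, prevD, single_map_f_self] using hcomm

end Single

section Contractible

variable {B : Type*} [Category* B] [Preadditive B]

lemma d_comp_hom_add_hom_comp_d {K : CochainComplex B ℤ} (h : Homotopy (𝟙 K) 0) (n : ℤ) :
    K.d n (n + 1) ≫ h.hom (n + 1) n + h.hom n (n - 1) ≫ K.d (n - 1) n = 𝟙 (K.X n) := by
  have hcomm := h.comm n
  rw [dNext_eq h.hom (i' := n + 1) (by simp), prevD_eq h.hom (j' := n - 1) (by simp)] at hcomm
  simpa using hcomm.symm

variable [HasZeroObject B] (K : CochainComplex B ℤ) {a n : ℤ}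

lemma isZero_stupidTruncGE_X (hn : n < a) : IsZero ((K.stupidTrunc (embeddingUpIntGE a)).X n) :=
  K.isZero_stupidTrunc_X _ n ((notMem_range_embeddingUpIntGE_iff a n).2 hn)

lemma isZero_stupidTruncLE_X (hn : a < n) : IsZero ((K.stupidTrunc (embeddingUpIntLE a)).X n) :=
  K.isZero_stupidTrunc_X _ n ((notMem_range_embeddingUpIntLE_iff a n).2 hn)

lemma stupidTruncGEProjX_comp_inclX (hn : a ≤ n) :
    stupidTruncProjX K (embeddingUpIntGE a) n ≫ stupidTruncInclX K (embeddingUpIntGE a) n =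
      𝟙 (K.X n) := by
  refine stupidTruncProjX_comp_inclX K _ ?_
  by_contra! h
  exact hn.not_gt ((notMem_range_embeddingUpIntGE_iff a n).1 h)

variable (a)

/-- The projection of the truncation `σ_{≥ a} K` onto its lowest term `K.X a`, placed in
degree `a`. -/
noncomputable def stupidTruncGEToSingle :
    K.stupidTrunc (embeddingUpIntGE a) ⟶ (single B (.up ℤ) a).obj (K.X a) :=
  mkHomToSingle (stupidTruncInclX K _ a) fun i hi ↦
    (isZero_stupidTruncGE_X K (by rw [up_Rel] at hi; lia)).eq_of_src _ _

variable {K} (h : Homotopy (𝟙 K) 0)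

/-- The map from `K.X a`, placed in degree `a`, to `σ_{≥ a} K` given by the endomorphism `h ≫ d`
of `K.X a`, where `h` is a contraction of `K`. -/
noncomputable def singleToStupidTruncGE :
    (single B (.up ℤ) a).obj (K.X a) ⟶ K.stupidTrunc (embeddingUpIntGE a) :=
  mkHomFromSingle (h.hom a (a - 1) ≫ K.d (a - 1) a ≫ stupidTruncProjX K _ a) fun k _ ↦ by
    simp [stupidTrunc_d, reassoc_of% (stupidTruncGEProjX_comp_inclX K le_rfl)]

lemma singleToStupidTruncGE_comp_toSingle :
    singleToStupidTruncGE a h ≫ stupidTruncGEToSingle K a =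
      (single B (.up ℤ) a).map (h.hom a (a - 1) ≫ K.d (a - 1) a) := by
  apply from_single_hom_ext
  simp [singleToStupidTruncGE, stupidTruncGEToSingle, single_map_f_self,
    reassoc_of% (stupidTruncGEProjX_comp_inclX K le_rfl)]

lemma truncated_hom_comp_d_add_toSingle_comp_singleTo (hn : a ≤ n) :
    (stupidTruncInclX K (embeddingUpIntGE a) n ≫ h.hom n (n - 1) ≫
        stupidTruncProjX K (embeddingUpIntGE a) (n - 1)) ≫
          (K.stupidTrunc (embeddingUpIntGE a)).d (n - 1) n +
        (stupidTruncGEToSingle K a ≫ singleToStupidTruncGE a h).f n =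
      stupidTruncInclX K (embeddingUpIntGE a) n ≫ (h.hom n (n - 1) ≫ K.d (n - 1) n) ≫
        stupidTruncProjX K (embeddingUpIntGE a) n := by
  rcases hn.eq_or_lt with rfl | hn
  · rw [(isZero_stupidTruncGE_X K (sub_one_lt a)).eq_of_src (HomologicalComplex.d _ _ _) 0]
    simp [singleToStupidTruncGE, stupidTruncGEToSingle]
  · rw [comp_f, (isZero_single_obj_X (.up ℤ) a (K.X a) n hn.ne').eq_of_src
      ((singleToStupidTruncGE a h).f n) 0]
    simp [stupidTrunc_d, reassoc_of% (stupidTruncGEProjX_comp_inclX K (Int.le_sub_one_of_lt hn))]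

/-- The truncation of a contraction `h` of `K` to degrees `≥ a` fails to be a contraction of
`σ_{≥ a} K` only in degree `a`, where the missing term is `h ≫ d`. -/
noncomputable def homotopyIdToSingleCompSingleTo :
    Homotopy (𝟙 (K.stupidTrunc (embeddingUpIntGE a)))
      (stupidTruncGEToSingle K a ≫ singleToStupidTruncGE a h) where
  hom i j := stupidTruncInclX K _ i ≫ h.hom i j ≫ stupidTruncProjX K _ j
  zero i j hij := by simp [h.zero i j hij]
  comm n := by
    rcases lt_or_ge n a with hn | hn
    · exact (isZero_stupidTruncGE_X K hn).eq_of_src _ _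
    · rw [dNext_eq _ (i' := n + 1) (by simp), prevD_eq _ (j' := n - 1) (by simp), add_assoc,
        truncated_hom_comp_d_add_toSingle_comp_singleTo a h hn, stupidTrunc_d]
      have hproj := stupidTruncGEProjX_comp_inclX K (hn.trans (lt_add_one n).le)
      calc 𝟙 _ = stupidTruncInclX K _ n ≫ (K.d n (n + 1) ≫ h.hom (n + 1) n +
            h.hom n (n - 1) ≫ K.d (n - 1) n) ≫ stupidTruncProjX K _ n := by
            rw [d_comp_hom_add_hom_comp_d, Category.id_comp, stupidTruncInclX_comp_projX]
        _ = _ := by simp [reassoc_of% hproj]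

/-- Stupid truncations of a contractible complex split idempotents: `σ_{≥ a} K` is the direct
summand of `K.X a` cut out by `h ≫ d`. -/
noncomputable def retractStupidTruncGE :
    Retract ((HomotopyCategory.quotient B _).obj (K.stupidTrunc (embeddingUpIntGE a)))
      ((HomotopyCategory.quotient B _).obj ((single B (.up ℤ) a).obj (K.X a))) where
  i := (HomotopyCategory.quotient B _).map (stupidTruncGEToSingle K a)
  r := (HomotopyCategory.quotient B _).map (singleToStupidTruncGE a h)
  retract := by
    rw [← Functor.map_comp, ← (HomotopyCategory.quotient B _).map_id]
    exact (HomotopyCategory.eq_of_homotopy _ _ (homotopyIdToSingleCompSingleTo a h)).symm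

lemma retractStupidTruncGE_r_comp_i :
    (retractStupidTruncGE a h).r ≫ (retractStupidTruncGE a h).i =
      (single B (.up ℤ) a ⋙ HomotopyCategory.quotient B _).map
        (h.hom a (a - 1) ≫ K.d (a - 1) a) :=
  ((HomotopyCategory.quotient B _).map_comp _ _).symm.trans
    (congrArg _ (singleToStupidTruncGE_comp_toSingle a h))

end Contractible

section Alternating

variable {B : Type*} [Category* B] [Preadditive B] {A : B} {f : A ⟶ A} (hf : f ≫ f = f) (a : ℤ)

/-- The periodic complex `⋯ ⟶ A ⟶ A ⟶ A ⟶ ⋯` of an idempotent `f`, whose differentials are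
alternately `f` and `𝟙 A - f`, the one that enters degree `a` being `f`. -/
def alternatingComplex : CochainComplex B ℤ where
  X _ := A
  d i j := if i + 1 = j then (if Even (i - a) then 𝟙 A - f else f) else 0
  shape i j hij := if_neg hij
  d_comp_d' i j k hij hjk := by
    obtain rfl : i + 1 = j := hij
    obtain rfl : i + 1 + 1 = k := hjk
    rw [add_sub_right_comm]
    rcases Int.even_or_odd (i - a) with hi | hi
    · simp [hf, hi, Int.not_odd_iff_even.2 hi]
    · simp [hf, hi, Int.not_even_iff_odd.2 hi]

/-- The contraction of `alternatingComplex hf a` by identities, which exists as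
`f + (𝟙 A - f) = 𝟙 A`. -/
def alternatingComplexContraction : Homotopy (𝟙 (alternatingComplex hf a)) 0 where
  hom i j := if j + 1 = i then 𝟙 A else 0
  zero i j hij := if_neg hij
  comm n := by
    rw [dNext_eq _ (i' := n + 1) (by simp), prevD_eq _ (j' := n - 1) (by simp)]
    change 𝟙 A = (if n + 1 = n + 1 then if Even (n - a) then 𝟙 A - f else f else 0) ≫
      (if n + 1 = n + 1 then 𝟙 A else 0) + (if n - 1 + 1 = n then 𝟙 A else 0) ≫
        (if n - 1 + 1 = n then if Even (n - 1 - a) then 𝟙 A - f else f else 0) + 0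
    rw [sub_right_comm]
    rcases Int.even_or_odd (n - a) with hn | hn
    · simp [hn, Int.not_odd_iff_even.2 hn]
    · simp [hn, Int.not_even_iff_odd.2 hn]

lemma alternatingComplexContraction_hom_comp_d :
    (alternatingComplexContraction hf a).hom a (a - 1) ≫
      (alternatingComplex hf a).d (a - 1) a = f := by
  change (if a - 1 + 1 = a then 𝟙 A else 0) ≫
    (if a - 1 + 1 = a then if Even (a - 1 - a) then 𝟙 A - f else f else 0) = f
  simp

end Alternating

section RetractSingle

variable {B : Type*} [Category* B] [Preadditive B] [HasZeroObject B]

lemma exists_iso_stupidTruncGE_of_retract_single {A : B} {a : ℤ} {W : HomotopyCategory B (.up ℤ)}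
    (h : Retract W ((HomotopyCategory.quotient B _).obj ((single B (.up ℤ) a).obj A))) :
    ∃ (K : CochainComplex B ℤ), Nonempty (Homotopy (𝟙 K) 0) ∧
      Nonempty (W ≅ (HomotopyCategory.quotient B _).obj (K.stupidTrunc (embeddingUpIntGE a))) := by
  obtain ⟨f, hf⟩ := (single B (.up ℤ) a ⋙ HomotopyCategory.quotient B _).map_surjective (h.r ≫ h.i)
  have hf_idem : f ≫ f = f := by
    apply (single B (.up ℤ) a ⋙ HomotopyCategory.quotient B _).map_injective
    rw [Functor.map_comp, hf, Category.assoc, h.retract_assoc]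
  let K := alternatingComplex hf_idem a
  let h₀ : Homotopy (𝟙 K) 0 := alternatingComplexContraction hf_idem a
  have hr : (retractStupidTruncGE a h₀).r ≫ (retractStupidTruncGE a h₀).i = h.r ≫ h.i :=
    (retractStupidTruncGE_r_comp_i a h₀).trans <|
      (congrArg _ (alternatingComplexContraction_hom_comp_d hf_idem a)).trans hf
  exact ⟨K, ⟨h₀⟩, ⟨isoOfRetract h (retractStupidTruncGE a h₀) hr.symm⟩⟩

end RetractSingle

section TruncTriangle

variable {B : Type*} [Category* B] [Preadditive B] [HasZeroObject B] [HasBinaryBiproducts B]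

lemma distinguished_stupidTruncTriangle (K : CochainComplex B ℤ) {a b : ℤ} (hab : a + 1 = b) :
    CochainComplex.trianglehOfDegreewiseSplit _
      (stupidTruncSplitting K (Embedding.embeddingUpInt_areComplementary a b hab).symm) ∈
        distTriang _ :=
  (HomotopyCategory.distinguished_iff_iso_trianglehOfDegreewiseSplit _).2 ⟨_, _, ⟨Iso.refl _⟩⟩

end TruncTriangle

section ConcentratedIn

open ZeroObject

variable {B : Type*} [Category* B] [Preadditive B]

/-- The complexes homotopy equivalent to a complex which vanishes in the degrees outside `S`. -/
def ConcentratedIn (S : Set ℤ) (X : HomotopyCategory B (.up ℤ)) : Prop :=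
  ∃ Y : CochainComplex B ℤ, (∀ n ∉ S, IsZero (Y.X n)) ∧
    Nonempty (X ≅ (HomotopyCategory.quotient B (.up ℤ)).obj Y)

namespace ConcentratedIn

variable {S S' S'' : Set ℤ} {X Y : HomotopyCategory B (.up ℤ)}

lemma of_iso (hX : ConcentratedIn S X) (e : Y ≅ X) : ConcentratedIn S Y := by
  obtain ⟨K, hK, ⟨e'⟩⟩ := hX
  exact ⟨K, hK, ⟨e ≪≫ e'⟩⟩

lemma shift (hX : ConcentratedIn S X) {k : ℤ} (h : (· + k) ⁻¹' S ⊆ S') :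
    ConcentratedIn S' (X⟦k⟧) := by
  obtain ⟨K, hK, ⟨e⟩⟩ := hX
  exact ⟨K⟦k⟧, fun n hn ↦ hK (n + k) fun hn' ↦ hn (h hn'),
    ⟨(shiftFunctor _ k).mapIso e ≪≫
      (((HomotopyCategory.quotient B (.up ℤ)).commShiftIso k).app K).symm⟩⟩

lemma hom_eq_zero (hX : ConcentratedIn S X) (hY : ConcentratedIn S' Y) (h : Disjoint S S')
    (f : X ⟶ Y) : f = 0 := by
  obtain ⟨K, hK, ⟨e⟩⟩ := hX
  obtain ⟨L, hL, ⟨e'⟩⟩ := hY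
  obtain ⟨g, hg⟩ := (HomotopyCategory.quotient B _).map_surjective (e.inv ≫ f ≫ e'.hom)
  have hg₀ : g = 0 := by
    ext n
    by_cases hn : n ∈ S
    · exact (hL n (h.notMem_of_mem_left hn)).eq_of_tgt _ _
    · exact (hK n hn).eq_of_src _ _
  rw [hg₀, Functor.map_zero] at hg
  simpa using hg.symm

section HasZeroObject

variable [HasZeroObject B]

lemma of_isZero (hX : IsZero X) : ConcentratedIn S X :=
  ⟨0, fun n _ ↦ (eval B _ n).map_isZero (isZero_zero _),
    ⟨hX.iso ((HomotopyCategory.quotient B _).map_isZero (isZero_zero _))⟩⟩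

lemma stupidTruncGE (K : CochainComplex B ℤ) (a : ℤ) :
    ConcentratedIn (Set.Ici a)
      ((HomotopyCategory.quotient B _).obj (K.stupidTrunc (embeddingUpIntGE a))) :=
  ⟨_, fun n hn ↦ isZero_stupidTruncGE_X K (by simpa using hn), ⟨Iso.refl _⟩⟩

lemma stupidTruncLE (K : CochainComplex B ℤ) (a : ℤ) :
    ConcentratedIn (Set.Iic a)
      ((HomotopyCategory.quotient B _).obj (K.stupidTrunc (embeddingUpIntLE a))) :=
  ⟨_, fun n hn ↦ isZero_stupidTruncLE_X K (by simpa using hn), ⟨Iso.refl _⟩⟩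

lemma exists_fac_single {a : ℤ} (hX : ConcentratedIn (Set.Ici a) X)
    (hY : ConcentratedIn (Set.Iic a) Y) (f : X ⟶ Y) :
    ∃ (A : B) (i : X ⟶ (HomotopyCategory.quotient B _).obj ((single B (.up ℤ) a).obj A))
      (r : (HomotopyCategory.quotient B _).obj ((single B (.up ℤ) a).obj A) ⟶ Y), i ≫ r = f := by
  obtain ⟨K, hK, ⟨e⟩⟩ := hX
  obtain ⟨L, hL, ⟨e'⟩⟩ := hY
  obtain ⟨g, hg⟩ := (HomotopyCategory.quotient B _).map_surjective (e.inv ≫ f ≫ e'.hom)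
  let i : K ⟶ (single B (.up ℤ) a).obj (K.X a) := mkHomToSingle (𝟙 _) fun k hk ↦
    (hK k (by grind [up_Rel])).eq_of_src _ _
  let r : (single B (.up ℤ) a).obj (K.X a) ⟶ L := mkHomFromSingle (g.f a) fun k hk ↦
    (hL k (by grind [up_Rel])).eq_of_tgt _ _
  have hir : i ≫ r = g := by
    ext n
    rcases lt_trichotomy n a with hn | rfl | hn
    · exact (hK n (by simpa)).eq_of_src _ _
    · simp [i, r]
    · exact (hL n (by simpa)).eq_of_tgt _ _
  refine ⟨K.X a, e.hom ≫ (HomotopyCategory.quotient B _).map i,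
    (HomotopyCategory.quotient B _).map r ≫ e'.inv, ?_⟩
  simp [← reassoc_of% (Functor.map_comp (HomotopyCategory.quotient B _) i r), hir, hg]

end HasZeroObject

variable [HasZeroObject B] [HasBinaryBiproducts B]

lemma obj₃_of_distTriang {T : Triangle (HomotopyCategory B (.up ℤ))} (hT : T ∈ distTriang _)
    (h₁ : ConcentratedIn S T.obj₁) (h₂ : ConcentratedIn S' T.obj₂)
    (hS : (· + 1) ⁻¹' S ⊆ S'') (hS' : S' ⊆ S'') : ConcentratedIn S'' T.obj₃ := by
  obtain ⟨K, hK, ⟨e₁⟩⟩ := h₁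
  obtain ⟨L, hL, ⟨e₂⟩⟩ := h₂
  obtain ⟨φ, hφ⟩ := (HomotopyCategory.quotient B _).map_surjective (e₁.inv ≫ T.mor₁ ≫ e₂.hom)
  have hcomm : T.mor₁ ≫ e₂.hom = e₁.hom ≫ (HomotopyCategory.quotient B _).map φ := by simp [hφ]
  refine ⟨CochainComplex.mappingCone φ, fun n hn ↦ ?_, ⟨Triangle.π₃.mapIso (isoTriangleOfIso₁₂ T _
    hT (HomotopyCategory.mappingCone_triangleh_distinguished φ) e₁ e₂ hcomm)⟩⟩
  rw [CochainComplex.mappingCone.isZero_X_iff]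
  exact ⟨hK _ fun h ↦ hn (hS h), hL _ fun h ↦ hn (hS' h)⟩

lemma obj₁_of_distTriang {T : Triangle (HomotopyCategory B (.up ℤ))} (hT : T ∈ distTriang _)
    (h₂ : ConcentratedIn S T.obj₂) (h₃ : ConcentratedIn S' T.obj₃)
    (hS : S ⊆ S'') (hS' : (· - 1) ⁻¹' S' ⊆ S'') : ConcentratedIn S'' T.obj₁ :=
  obj₃_of_distTriang (inv_rot_of_distTriang _ (inv_rot_of_distTriang _ hT))
    (h₂.shift subset_rfl) (h₃.shift subset_rfl) (fun n hn ↦ hS (by simpa using hn)) hS'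

lemma exists_distTriang (X : HomotopyCategory B (.up ℤ)) {a b : ℤ} (hab : a + 1 = b) :
    ∃ (L R : HomotopyCategory B (.up ℤ)) (f : L ⟶ X) (g : X ⟶ R) (δ : R ⟶ L⟦(1 : ℤ)⟧),
      Triangle.mk f g δ ∈ distTriang _ ∧
        ConcentratedIn (Set.Ici b) L ∧ ConcentratedIn (Set.Iic a) R := by
  obtain ⟨K, rfl⟩ := HomotopyCategory.quotient_obj_surjective X
  exact ⟨_, _, _, _, _, distinguished_stupidTruncTriangle K hab, stupidTruncGE K b,
    stupidTruncLE K a⟩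

/- As `K` is zero in the homotopy category, the truncation triangle identifies `σ_{≥ a} K` with a
shift of `σ_{≤ a - 1} K`. -/
lemma stupidTruncGE_of_contractible {K : CochainComplex B ℤ} (h : Homotopy (𝟙 K) 0) (a : ℤ) :
    ConcentratedIn (Set.Iic a)
      ((HomotopyCategory.quotient B _).obj (K.stupidTrunc (embeddingUpIntGE a))) :=
  obj₁_of_distTriang (S := ∅) (distinguished_stupidTruncTriangle K (sub_add_cancel a 1))
    (of_isZero ((HomotopyCategory.isZero_quotient_obj_iff _).2 ⟨h⟩)) (stupidTruncLE K (a - 1))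
    (Set.empty_subset _) fun n hn ↦ by grind

lemma of_retract_single {A : B} {a : ℤ}
    (h : Retract X ((HomotopyCategory.quotient B _).obj ((single B (.up ℤ) a).obj A))) :
    ConcentratedIn (Set.Ici a) X ∧ ConcentratedIn (Set.Iic a) X := by
  obtain ⟨K, ⟨h₀⟩, ⟨e⟩⟩ := exists_iso_stupidTruncGE_of_retract_single h
  exact ⟨(stupidTruncGE K a).of_iso e, (stupidTruncGE_of_contractible h₀ a).of_iso e⟩

lemma of_retract_Ici {a : ℤ} (hY : ConcentratedIn (Set.Ici a) Y) (h : Retract X Y) :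
    ConcentratedIn (Set.Ici a) X := by
  obtain ⟨L, R, f, g, δ, hT, hL, hR⟩ := exists_distTriang X (sub_add_cancel a 1)
  have hg : g = 0 := by
    rw [← Category.id_comp g, ← h.retract, Category.assoc,
      hY.hom_eq_zero hR (Set.Iic_disjoint_Ici.2 (by simp)).symm (h.r ≫ g), comp_zero]
  obtain ⟨s, r, hT', -, hr⟩ := exists_complementary_distTriang (inv_rot_of_distTriang _ hT)
    ((congrArg (· ≫ _) hg).trans zero_comp)
  obtain ⟨A, i, p, rfl⟩ := hL.exists_fac_single (hR.shift fun n hn ↦ by grind) r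
  have hR' := (of_retract_single ⟨(Triangle.mk f g δ).invRotate.mor₁ ≫ i, p,
    (Category.assoc _ _ _).trans hr⟩).1
  exact obj₁_of_distTriang hT' hL hR' subset_rfl fun n hn ↦ by grind

lemma of_retract_Iic {a : ℤ} (hY : ConcentratedIn (Set.Iic a) Y) (h : Retract X Y) :
    ConcentratedIn (Set.Iic a) X := by
  obtain ⟨L, R, f, g, δ, hT, hL, hR⟩ := exists_distTriang X (rfl : a + 1 = _)
  have hf : f = 0 := by
    rw [← Category.comp_id f, ← h.retract, ← Category.assoc,
      hL.hom_eq_zero hY (Set.Iic_disjoint_Ici.2 (by simp)).symm (f ≫ h.i), zero_comp]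
  obtain ⟨s, r, hT', hs, -⟩ := exists_complementary_distTriang (rot_of_distTriang _ hT)
    (by subst hf; exact neg_eq_zero.2 (Functor.map_zero _ _ _))
  obtain ⟨A, i, p, rfl⟩ := (hL.shift fun n hn ↦ by grind).exists_fac_single hR s
  have hL' := (of_retract_single ⟨i, p ≫ δ, (Category.assoc _ _ _).symm.trans hs⟩).2
  exact obj₃_of_distTriang hT' hL' hR (fun n hn ↦ by grind) subset_rfl

end ConcentratedIn

end ConcentratedIn

section WeightStructure

variable (B : Type*) [Category* B] [Preadditive B] [HasZeroObject B] [HasBinaryBiproducts B]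

/-- The stupid weight structure on `K(B)`. The weight is the negative of the cohomological degree,
so `w ≤ 0` means degrees `≥ 0`. -/
def stupidWeightStructure : WeightStructure (HomotopyCategory B (.up ℤ)) where
  LE := {X | ConcentratedIn (Set.Ici 0) X}
  GE := {X | ConcentratedIn (Set.Iic 0) X}
  retract_mem_LE := fun _ _ ⟨i, r, h⟩ hY ↦ hY.of_retract_Ici ⟨i, r, h⟩
  retract_mem_GE := fun _ _ ⟨i, r, h⟩ hY ↦ hY.of_retract_Iic ⟨i, r, h⟩
  shift_LE _ hX := hX.shift fun n hn ↦ by grind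
  shift_GE _ hX := hX.shift fun n hn ↦ by grind
  orthogonal _ _ hX hY := hX.hom_eq_zero (hY.shift (S' := Set.Iic (-1)) fun n hn ↦ by grind)
    (Set.Iic_disjoint_Ici.2 (by simp)).symm
  exists_decomp M := by
    obtain ⟨L, R, f, g, δ, hT, hL, hR⟩ := ConcentratedIn.exists_distTriang M (sub_add_cancel 0 1)
    exact ⟨L, R, f, g, δ, hT, hL, hR.shift fun n hn ↦ by grind⟩

end WeightStructure

end StupidWeightStructure

theorem stmt_9 (B : Type u₂) [Category.{v₂} B] [Preadditive B] [HasZeroObject B]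
    [HasBinaryBiproducts B] :
    ∃ w : WeightStructure (HomotopyCategory B (ComplexShape.up ℤ)),
      w.LE = {X : HomotopyCategory B (ComplexShape.up ℤ) |
        ∃ Y : CochainComplex B ℤ, (∀ n : ℤ, n < 0 → IsZero (Y.X n)) ∧
          Nonempty (X ≅ (HomotopyCategory.quotient B (ComplexShape.up ℤ)).obj Y)} ∧
      w.GE = {X : HomotopyCategory B (ComplexShape.up ℤ) |
        ∃ Y : CochainComplex B ℤ, (∀ n : ℤ, 0 < n → IsZero (Y.X n)) ∧
          Nonempty (X ≅ (HomotopyCategory.quotient B (ComplexShape.up ℤ)).obj Y)} := by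
  refine ⟨StupidWeightStructure.stupidWeightStructure B, ?_, ?_⟩
  · simp [StupidWeightStructure.stupidWeightStructure, StupidWeightStructure.ConcentratedIn]
  · simp [StupidWeightStructure.stupidWeightStructure, StupidWeightStructure.ConcentratedIn]
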